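/- Let r > 1 be a real number and let F_r' be the union of the sets U_q' over all q with 1 < q < r and ⌈q⌉ = ⌈r⌉. The following four statements are equivalent: (i) r ∈ closure(U); (ii) U_r' ∖ F_r' is uncountable; (iii) U_r' ∖ U_q' is uncountable for each q < r with ⌈q⌉ = ⌈r⌉; (iv) U_r' ∖ U_q' is nonempty for each q < r with ⌈q⌉ = ⌈r⌉. -/

import Mathlib

/-!
Write `A = ⌈r⌉ - 1`, let `α(r)` be the quasi-greedy expansion of `1` and let a bar denote the
reflection `c ↦ A - c` of digits. All four statements are shown to be equivalent to the strict
reflection condition (`StrictRefl`)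

  `overline{α_{k+1}(r) α_{k+2}(r) …} < α(r)` lexicographically, for all `k ≥ 1`.

The basic tool is the lexicographic characterization of univoque sequences (`mem_USeq_of_adm`,
`adm_of_mem_USeq`): `c` is univoque in base `q` iff its tails following a digit `< A`, and its
reflected tails following a digit `> 0`, are smaller than `α(q)`. It is combined with the strict
monotonicity and left continuity of `q ↦ α(q)`.

* (iv) implies the condition (`strictRefl_of_nonempty`): if it fails at `k`, with `α_k > 0`, then a
  univoque sequence in base `r` cannot contain `α_1 … α_k` behind a digit `< A`, so the univoque
  sequences are the same for every `q < r` for which `α(q)` and `α(r)` share `k` digits.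
* (i) implies the condition (`strictRefl_of_closure`): a pointwise limit of `α(q_n)` for univoque
  `q_n → r` is an infinite expansion of `1` all of whose tails are at most itself, hence it is
  `α(r)`. A failure at `k` contradicts the condition at `q_n < r` directly, while for `q_n > r` it
  makes `α(r)` periodic, which is incompatible with `α(q_n) > α(r)` and a long common prefix.
* The condition implies (ii) (`uncountable_of_strictRefl`): there are infinitely many good `n`, for
  which `overline{α_{k+1} … α_n} < α_1 … α_{n-k}` for all `k < n` (`exists_good`). Concatenating
  the words `α_1 … α_{n-1} (α_n - 1)` over a rapidly growing sequence of good lengths gives a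
  univoque sequence containing arbitrarily long prefixes of `α(r)`, so it is not univoque in any
  smaller base; there are uncountably many choices of the lengths.
* The condition implies (i) (`closure_of_strictRefl`): either `r` is univoque itself, or `α(r)` is
  periodic and one long good word followed by constant repetitions of a shorter one is the unique
  expansion of `1` in a base slightly below `r`.
-/

noncomputable section

/-- The largest integer smaller than `q`, as a natural number (for `q > 1` this is `⌈q⌉ - 1`). -/
def topDigit (q : ℝ) : ℕ := ⌈q⌉.toNat - 1

/-- Greedy digit associated to a remainder `y` : the largest nonnegative integer `b` with
`b < q` and `b ≤ q * y`. -/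
def gDigit (q y : ℝ) : ℕ := min (topDigit q) ⌊q * y⌋₊

/-- Remainders of the greedy algorithm in base `q` starting from `x`. -/
def gRem (q x : ℝ) : ℕ → ℝ
  | 0 => x
  | n + 1 => q * gRem q x n - gDigit q (gRem q x n)

/-- The greedy expansion of `x` in base `q`, `0`-indexed: `greedy q x n` is the digit `b_{n+1}`,
i.e. the largest integer smaller than `q` such that `∑_{i ≤ n} (greedy q x i) / q^(i+1) ≤ x`. -/
def greedy (q x : ℝ) (n : ℕ) : ℕ := gDigit q (gRem q x n)

/-- Quasi-greedy digit associated to a remainder `y` : the largest nonnegative integer `b` with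
`b < q` and `b < q * y` (it is `0` when no such integer exists, matching the convention that the
quasi-greedy expansion of `0` is `0^∞`). -/
def qgDigit (q y : ℝ) : ℕ := min (topDigit q) (⌈q * y⌉.toNat - 1)

/-- Remainders of the quasi-greedy algorithm in base `q` starting from `x`. -/
def qgRem (q x : ℝ) : ℕ → ℝ
  | 0 => x
  | n + 1 => q * qgRem q x n - qgDigit q (qgRem q x n)

/-- The quasi-greedy expansion of `x` in base `q`, `0`-indexed: `quasiGreedy q x n` is the digit
`a_{n+1}`, i.e. the largest integer smaller than `q` with `∑_{i ≤ n} (quasiGreedy q x i) / q^(i+1) < x`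
(with the convention `quasiGreedy q 0 = 0^∞`). -/
def quasiGreedy (q x : ℝ) (n : ℕ) : ℕ := qgDigit q (qgRem q x n)

/-- `alphaSeq q` is the quasi-greedy expansion of `1` in base `q` (`0`-indexed:
`alphaSeq q (i-1) = α_i(q)`). -/
def alphaSeq (q : ℝ) : ℕ → ℕ := quasiGreedy q 1

/-- Strict lexicographic order on digit sequences. -/
def lexLt (a b : ℕ → ℕ) : Prop := ∃ n, (∀ i, i < n → a i = b i) ∧ a n < b n

/-- Lexicographic order on digit sequences. -/
def lexLe (a b : ℕ → ℕ) : Prop := lexLt a b ∨ a = b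

/-- `c` is an expansion of `x` in base `q`: the digits are nonnegative integers smaller than `q`
and `x = ∑_{i≥0} c_i / q^(i+1)`. -/
def IsExpansion (q : ℝ) (c : ℕ → ℕ) (x : ℝ) : Prop :=
  (∀ i, (c i : ℝ) < q) ∧ x = ∑' i : ℕ, (c i : ℝ) / q ^ (i + 1)

/-- The interval `J_q = [0, (⌈q⌉-1)/(q-1)]` of numbers having an expansion in base `q`. -/
def Jset (q : ℝ) : Set ℝ := Set.Icc 0 (((⌈q⌉ : ℝ) - 1) / (q - 1))

/-- `USet q` is the set `𝒰_q` of numbers `x ∈ J_q` having a unique expansion in base `q`. -/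
def USet (q : ℝ) : Set ℝ := {x | x ∈ Jset q ∧ ∃! c, IsExpansion q c x}

/-- `USeq q` is the set `𝒰_q'` of univoque sequences in base `q`, i.e. sequences that are the
unique expansion in base `q` of some number. -/
def USeq (q : ℝ) : Set (ℕ → ℕ) :=
  {c | ∃ x, IsExpansion q c x ∧ ∀ c', IsExpansion q c' x → c' = c}

/-- The set `𝒰` of univoque bases: `q > 1` such that `1` has a unique expansion in base `q`. -/
def UnivBases : Set ℝ := {q | 1 < q ∧ ∃! c, IsExpansion q c 1}

/-- The set `𝒱_q`: numbers `x ∈ J_q` whose quasi-greedy expansion `(a_i)` satisfies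
`overline{a_{n+1} a_{n+2} …} ≤ α_1 α_2 …` whenever `a_n > 0`. -/
def VSet (q : ℝ) : Set ℝ :=
  {x | x ∈ Jset q ∧ ∀ n, 0 < quasiGreedy q x n →
    lexLe (fun i => topDigit q - quasiGreedy q x (n + 1 + i)) (alphaSeq q)}

/-- `VSeq q` is the set `𝒱_q'` of quasi-greedy expansions of elements of `𝒱_q`. -/
def VSeq (q : ℝ) : Set (ℕ → ℕ) := (fun x => quasiGreedy q x) '' VSet q

/-- The set `𝒱` of bases `q > 1` with `overline{α_{k+1} α_{k+2} …} ≤ α_1 α_2 …` for all `k ≥ 1`. -/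
def VBases : Set ℝ :=
  {q | 1 < q ∧ ∀ k, 1 ≤ k → lexLe (fun i => topDigit q - alphaSeq q (k + i)) (alphaSeq q)}

/-- A digit sequence is infinite if it has infinitely many nonzero terms. -/
def InfiniteSeq (c : ℕ → ℕ) : Prop := ∀ N, ∃ i, N ≤ i ∧ c i ≠ 0

/-- A digit sequence is ultimately periodic if some tail of it is periodic. -/
def UltimatelyPeriodic (c : ℕ → ℕ) : Prop := ∃ n p, 0 < p ∧ ∀ i, n ≤ i → c (i + p) = c i

end

/-- The tail `c_{n+1} c_{n+2} …` of a digit sequence (`0`-indexed: drop the first `n` terms). -/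
def tail (n : ℕ) (c : ℕ → ℕ) : ℕ → ℕ := fun i => c (n + i)

/-- The reflection `(A - c_i)` of a digit sequence with digits in `{0, …, A}`. -/
def reflect (A : ℕ) (c : ℕ → ℕ) : ℕ → ℕ := fun i => A - c i

/-- The value `∑ c_i q^{-i}` of a digit sequence in base `q`. -/
noncomputable def val (q : ℝ) (c : ℕ → ℕ) : ℝ := ∑' i : ℕ, (c i : ℝ) / q ^ (i + 1)

/-! ### Lexicographic order -/

theorem tail_tail (m n : ℕ) (c : ℕ → ℕ) : tail m (tail n c) = tail (n + m) c := by
  funext i; simp [tail, add_assoc]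

theorem reflect_reflect {A : ℕ} {c : ℕ → ℕ} (h : ∀ i, c i ≤ A) : reflect A (reflect A c) = c := by
  funext i; have := h i; simp only [reflect]; omega

theorem lexLt_irrefl (a : ℕ → ℕ) : ¬ lexLt a a := by
  rintro ⟨n, -, h⟩; exact lt_irrefl _ h

theorem lexLt_trans {a b c : ℕ → ℕ} (h1 : lexLt a b) (h2 : lexLt b c) : lexLt a c := by
  obtain ⟨n, hn, hn'⟩ := h1
  obtain ⟨m, hm, hm'⟩ := h2
  rcases lt_trichotomy n m with h | h | h
  · exact ⟨n, fun i hi => (hn i hi).trans (hm i (hi.trans h)), by rw [← hm n h]; exact hn'⟩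
  · subst h
    exact ⟨n, fun i hi => (hn i hi).trans (hm i hi), hn'.trans hm'⟩
  · exact ⟨m, fun i hi => (hn i (hi.trans h)).trans (hm i hi), by rw [hn m h]; exact hm'⟩

theorem lexLt_of_lt_of_le {a b c : ℕ → ℕ} (h1 : lexLt a b) (h2 : lexLe b c) : lexLt a c := by
  rcases h2 with h2 | rfl
  · exact lexLt_trans h1 h2
  · exact h1

theorem lexLt_of_le_of_lt {a b c : ℕ → ℕ} (h1 : lexLe a b) (h2 : lexLt b c) : lexLt a c := by
  rcases h1 with h1 | rfl
  · exact lexLt_trans h1 h2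
  · exact h2

theorem not_lexLt_of_lexLe {a b : ℕ → ℕ} (h : lexLe a b) : ¬ lexLt b a :=
  fun h' => lexLt_irrefl _ (lexLt_of_lt_of_le h' h)

theorem lexLe_total (a b : ℕ → ℕ) : lexLe a b ∨ lexLt b a := by
  by_cases h : a = b
  · exact Or.inl (Or.inr h)
  · have h' : ∃ n, a n ≠ b n := by
      by_contra hc; push Not at hc; exact h (funext hc)
    classical
    have hlt : ∀ i, i < Nat.find h' → a i = b i := fun i hi => by
      simpa using Nat.find_min h' hi
    rcases lt_or_gt_of_ne (Nat.find_spec h') with h1 | h1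
    · exact Or.inl (Or.inl ⟨_, hlt, h1⟩)
    · exact Or.inr ⟨_, fun i hi => (hlt i hi).symm, h1⟩

theorem lexLe_of_not_lexLt {a b : ℕ → ℕ} (h : ¬ lexLt a b) : lexLe b a :=
  (lexLe_total b a).resolve_right h

theorem lexLe_antisymm {a b : ℕ → ℕ} (h : lexLe a b) (h' : lexLe b a) : a = b := by
  rcases h with h | h
  · exact absurd h (not_lexLt_of_lexLe h')
  · exact h

/-- Reflection reverses the lexicographic order. -/
theorem lexLt_reflect_iff {A : ℕ} {a b : ℕ → ℕ} (ha : ∀ i, a i ≤ A) (hb : ∀ i, b i ≤ A) :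
    lexLt (reflect A a) (reflect A b) ↔ lexLt b a := by
  constructor
  · rintro ⟨n, h1, h2⟩
    refine ⟨n, fun i hi => ?_, ?_⟩
    · have := h1 i hi; have := ha i; have := hb i; simp only [reflect] at *; omega
    · have := ha n; have := hb n; simp only [reflect] at *; omega
  · rintro ⟨n, h1, h2⟩
    refine ⟨n, fun i hi => ?_, ?_⟩
    · have := h1 i hi; simp only [reflect]; omega
    · have := ha n; have := hb n; simp only [reflect]; omega

/-- Comparing tails behind a common prefix. -/
theorem lexLt_tail {a b : ℕ → ℕ} (k : ℕ) (h : lexLt a b) (hk : ∀ i < k, a i = b i) :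
    lexLt (tail k a) (tail k b) := by
  obtain ⟨n, h1, h2⟩ := h
  have hkn : k ≤ n := by
    by_contra hc
    have := hk n (by omega)
    omega
  refine ⟨n - k, fun i hi => h1 _ (by omega), ?_⟩
  simp only [tail]
  rwa [show k + (n - k) = n by omega]

/-- If `a` drops below `b` at position `n` and `b ≤ b'`, then `a` drops below `b'` no later. -/
theorem lexLt_trunc {a b b' : ℕ → ℕ} {n : ℕ} (h1 : ∀ i < n, a i = b i) (h2 : a n < b n)
    (h : lexLe b b') : ∃ t ≤ n, (∀ i < t, a i = b' i) ∧ a t < b' t := by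
  rcases h with ⟨m, hm, hm'⟩ | rfl
  · rcases lt_trichotomy n m with h | h | h
    · exact ⟨n, le_rfl, fun i hi => (h1 i hi).trans (hm i (hi.trans h)), by rw [← hm n h]; exact h2⟩
    · subst h
      exact ⟨n, le_rfl, fun i hi => (h1 i hi).trans (hm i hi), h2.trans hm'⟩
    · exact ⟨m, h.le, fun i hi => (h1 i (hi.trans h)).trans (hm i hi), by rw [h1 m h]; exact hm'⟩
  · exact ⟨n, le_rfl, h1, h2⟩

/-- A sequence squeezed between two sequences with a common prefix shares that prefix. -/
theorem lex_squeeze {a b c : ℕ → ℕ} {k : ℕ} (hab : lexLe a b) (hbc : lexLt b c)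
    (hac : ∀ i < k, a i = c i) : ∀ i < k, b i = c i := by
  obtain ⟨n, h1, h2⟩ := hbc
  rcases Nat.lt_or_ge n k with h | h
  · exfalso
    refine not_lexLt_of_lexLe hab ⟨n, fun i hi => ?_, ?_⟩
    · rw [h1 i hi, hac i (hi.trans h)]
    · rw [hac n h]; exact h2
  · exact fun i hi => h1 i (by omega)

/-! ### Values of digit sequences -/

theorem summable_digits {q : ℝ} (hq : 1 < q) {A : ℕ} {c : ℕ → ℕ} (hc : ∀ i, c i ≤ A) :
    Summable fun i : ℕ => (c i : ℝ) / q ^ (i + 1) := by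
  have h0 : 0 < q := by linarith
  have hg : Summable fun i : ℕ => (A : ℝ) * (1 / q) ^ (i + 1) :=
    ((summable_nat_add_iff 1).2 (summable_geometric_of_lt_one (by positivity)
      ((div_lt_one h0).2 hq))).mul_left _
  refine Summable.of_nonneg_of_le (fun i => by positivity) (fun i => ?_) hg
  rw [one_div, inv_pow, ← div_eq_mul_inv]
  gcongr
  exact hc i

theorem val_nonneg {q : ℝ} (hq : 1 < q) (c : ℕ → ℕ) : 0 ≤ val q c :=
  tsum_nonneg fun i => by have : 0 < q := by linarith
                          positivity

theorem val_split {q : ℝ} (hq : 1 < q) {A : ℕ} {c : ℕ → ℕ} (hc : ∀ i, c i ≤ A) (n : ℕ) :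
    val q c = ∑ i ∈ Finset.range n, (c i : ℝ) / q ^ (i + 1) + val q (tail n c) / q ^ n := by
  have h0 : 0 < q := by linarith
  rw [val, ← (summable_digits hq hc).sum_add_tsum_nat_add n, val, ← tsum_div_const]
  congr 1
  refine tsum_congr fun i => ?_
  rw [tail, add_comm i n, div_div, ← pow_add]
  congr 2; ring

theorem val_const {q : ℝ} (hq : 1 < q) (A : ℕ) : val q (fun _ => A) = A / (q - 1) := by
  have h0 : 0 < q := by linarith
  have h := val_split hq (A := A) (c := fun _ => A) (fun _ => le_rfl) 1
  have ht : tail 1 (fun _ => A) = fun _ => A := rfl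
  rw [ht] at h
  simp only [Finset.sum_range_one, zero_add, pow_one] at h
  have h1 : q - 1 ≠ 0 := by linarith
  field_simp at h ⊢
  linarith

theorem val_reflect {q : ℝ} (hq : 1 < q) {A : ℕ} {c : ℕ → ℕ} (hc : ∀ i, c i ≤ A) :
    val q (reflect A c) = A / (q - 1) - val q c := by
  rw [← val_const hq A, val, val, val,
    ← (summable_digits hq (fun _ => le_refl A)).tsum_sub (summable_digits hq hc)]
  refine tsum_congr fun i => ?_
  rw [reflect, Nat.cast_sub (hc i), sub_div]

theorem val_le {q : ℝ} (hq : 1 < q) {A : ℕ} {c : ℕ → ℕ} (hc : ∀ i, c i ≤ A) :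
    val q c ≤ A / (q - 1) := by
  have := val_reflect hq hc
  have := val_nonneg hq (reflect A c)
  linarith

theorem sum_le_val {q : ℝ} (hq : 1 < q) {A : ℕ} {c : ℕ → ℕ} (hc : ∀ i, c i ≤ A) (n : ℕ) :
    ∑ i ∈ Finset.range n, (c i : ℝ) / q ^ (i + 1) ≤ val q c := by
  rw [val_split hq hc n]
  have := val_nonneg hq (tail n c)
  have h0 : 0 < q := by linarith
  have : 0 ≤ val q (tail n c) / q ^ n := by positivity
  linarith

theorem val_pos {q : ℝ} (hq : 1 < q) {A : ℕ} {c : ℕ → ℕ} (hc : ∀ i, c i ≤ A) {n : ℕ}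
    (hn : c n ≠ 0) : 0 < val q c := by
  have h0 : 0 < q := by linarith
  have h := sum_le_val hq hc (n + 1)
  rw [Finset.sum_range_succ] at h
  have h1 : 0 < (c n : ℝ) / q ^ (n + 1) := by
    have : 0 < c n := Nat.pos_of_ne_zero hn
    positivity
  have h2 : 0 ≤ ∑ i ∈ Finset.range n, (c i : ℝ) / q ^ (i + 1) :=
    Finset.sum_nonneg fun i _ => by positivity
  linarith

theorem val_tail_pos {q : ℝ} (hq : 1 < q) {A : ℕ} {c : ℕ → ℕ} (hc : ∀ i, c i ≤ A)
    (hinf : InfiniteSeq c) (n : ℕ) : 0 < val q (tail n c) := by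
  obtain ⟨i, hi, hci⟩ := hinf n
  refine val_pos hq (A := A) (fun i => hc _) (n := i - n) ?_
  simpa [tail, Nat.add_sub_cancel' hi] using hci

/-- The value of a nonzero sequence strictly decreases as the base grows. -/
theorem val_strictAnti {q r : ℝ} (hq : 1 < q) (hqr : q < r) {A : ℕ} {c : ℕ → ℕ}
    (hc : ∀ i, c i ≤ A) {n : ℕ} (hn : c n ≠ 0) : val r c < val q c := by
  have h0 : 0 < q := by linarith
  refine Summable.tsum_lt_tsum (i := n) (fun i => ?_) ?_ (summable_digits (hq.trans hqr) hc)
    (summable_digits hq hc)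
  · gcongr
  · have : 0 < c n := Nat.pos_of_ne_zero hn
    have h1 : q ^ (n + 1) < r ^ (n + 1) := by gcongr
    gcongr

/-- A bounded orbit `y_{n+1} = q y_n - c_n` forces `y_0` to be the value of `(c_n)`. -/
theorem val_of_orbit {q : ℝ} (hq : 1 < q) {A : ℕ} {c : ℕ → ℕ} (hc : ∀ i, c i ≤ A) {y : ℕ → ℝ}
    (hy : ∀ n, y (n + 1) = q * y n - c n) {B : ℝ} (h0 : ∀ n, 0 ≤ y n) (hB : ∀ n, y n ≤ B) :
    y 0 = val q c := by
  have hq0 : 0 < q := by linarith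
  have key : ∀ n, y 0 = ∑ i ∈ Finset.range n, (c i : ℝ) / q ^ (i + 1) + y n / q ^ n := by
    intro n
    induction n with
    | zero => simp
    | succ n ih =>
      rw [ih, Finset.sum_range_succ, hy n]
      field_simp
      ring
  have hlim : Filter.Tendsto (fun n => y n / q ^ n) Filter.atTop (nhds 0) := by
    have hp : Filter.Tendsto (fun n : ℕ => B * (1 / q) ^ n) Filter.atTop (nhds (B * 0)) :=
      (tendsto_pow_atTop_nhds_zero_of_lt_one (by positivity) ((div_lt_one hq0).2 hq)).const_mul B
    rw [mul_zero] at hp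
    refine squeeze_zero (fun n => div_nonneg (h0 n) (by positivity)) (fun n => ?_) hp
    rw [one_div, inv_pow, ← div_eq_mul_inv]
    exact div_le_div_of_nonneg_right (hB n) (by positivity)
  have hs := ((summable_digits hq hc).hasSum.tendsto_sum_nat).add hlim
  rw [add_zero] at hs
  refine tendsto_nhds_unique ?_ hs
  refine (tendsto_const_nhds (x := y 0)).congr fun n => key n

/-- Joint continuity of `val` in the base and in the (pointwise convergent) digits. -/
theorem tendsto_val {ι : Type*} {l : Filter ι} {q : ι → ℝ} {r : ℝ} (hr : 1 < r)
    (hq : Filter.Tendsto q l (nhds r)) {A : ℕ} {c : ι → ℕ → ℕ} {γ : ℕ → ℕ}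
    (hc : ∀ᶠ n in l, ∀ i, c n i ≤ A) (hγ : ∀ i, ∀ᶠ n in l, c n i = γ i) :
    Filter.Tendsto (fun n => val (q n) (c n)) l (nhds (val r γ)) := by
  obtain ⟨s, hs1, hsr⟩ := exists_between hr
  have hs0 : 0 < s := by linarith
  refine tendsto_tsum_of_dominated_convergence
    (summable_digits hs1 (A := A) (c := fun _ => A) (fun _ => le_rfl)) (fun i => ?_) ?_
  · have h1 : Filter.Tendsto (fun n => (γ i : ℝ) / q n ^ (i + 1)) l
        (nhds ((γ i : ℝ) / r ^ (i + 1))) :=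
      tendsto_const_nhds.div (hq.pow _) (by have : 0 < r := by linarith
                                            positivity)
    refine h1.congr' ?_
    filter_upwards [hγ i] with n hn
    rw [hn]
  · filter_upwards [hc, hq.eventually (lt_mem_nhds hsr)] with n hn hqn i
    have hq0 : 0 < q n := by linarith
    rw [Real.norm_of_nonneg (by positivity)]
    have := hn i
    gcongr

/-! ### The quasi-greedy expansion of `1` -/

theorem topDigit_spec {q : ℝ} (hq : 1 < q) :
    1 ≤ topDigit q ∧ (topDigit q : ℝ) < q ∧ q ≤ topDigit q + 1 := by
  have h1 : 1 < ⌈q⌉ := by rw [Int.lt_ceil]; simpa using hq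
  have h2 : ((topDigit q : ℕ) : ℤ) = ⌈q⌉ - 1 := by unfold topDigit; omega
  have h3 : ((topDigit q : ℕ) : ℝ) = ⌈q⌉ - 1 := by exact_mod_cast h2
  refine ⟨by omega, ?_, ?_⟩
  · rw [h3]; linarith [Int.ceil_lt_add_one q]
  · rw [h3]; linarith [Int.le_ceil q]

theorem topDigit_congr {q r : ℝ} (h : ⌈q⌉ = ⌈r⌉) : topDigit q = topDigit r := by
  unfold topDigit; rw [h]

theorem ceil_eq_of_topDigit {q r : ℝ} (hr : 1 < r) (h1 : (topDigit r : ℝ) < q)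
    (h2 : q ≤ topDigit r + 1) : ⌈q⌉ = ⌈r⌉ := by
  obtain ⟨-, h3, h4⟩ := topDigit_spec hr
  have e : ∀ s : ℝ, (topDigit r : ℝ) < s → s ≤ topDigit r + 1 → ⌈s⌉ = (topDigit r : ℤ) + 1 := by
    intro s hs hs'
    rw [Int.ceil_eq_iff]
    push_cast
    constructor <;> linarith
  rw [e q h1 h2, e r h3 h4]

theorem digit_lt_iff {q : ℝ} (hq : 1 < q) (n : ℕ) : (n : ℝ) < q ↔ n ≤ topDigit q := by
  obtain ⟨-, h1, h2⟩ := topDigit_spec hq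
  constructor
  · intro h
    have : (n : ℝ) < (topDigit q + 1 : ℕ) := by push_cast; linarith
    have : n < topDigit q + 1 := by exact_mod_cast this
    omega
  · intro h
    have : (n : ℝ) ≤ topDigit q := by exact_mod_cast h
    linarith

theorem isExpansion_iff {q : ℝ} (hq : 1 < q) (c : ℕ → ℕ) (x : ℝ) :
    IsExpansion q c x ↔ (∀ i, c i ≤ topDigit q) ∧ x = val q c := by
  unfold IsExpansion val
  simp only [digit_lt_iff hq]

/-- Along the quasi-greedy algorithm for `1` the remainders stay in `(0, 1]`, and the cap by the
top digit is never active. -/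
theorem qgRem_one {q : ℝ} (hq : 1 < q) (n : ℕ) :
    0 < qgRem q 1 n ∧ qgRem q 1 n ≤ 1 ∧ (alphaSeq q n : ℝ) = ⌈q * qgRem q 1 n⌉ - 1 := by
  obtain ⟨hA, h1, h2⟩ := topDigit_spec hq
  have dig : ∀ y : ℝ, 0 < y → y ≤ 1 → (qgDigit q y : ℝ) = ⌈q * y⌉ - 1 := by
    intro y hy hy1
    have hp : 0 < q * y := by positivity
    have h3 : 0 < ⌈q * y⌉ := Int.ceil_pos.2 hp
    have h4 : ⌈q * y⌉ ≤ (topDigit q : ℤ) + 1 := by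
      rw [Int.ceil_le]; push_cast; nlinarith
    have h5 : ((qgDigit q y : ℕ) : ℤ) = ⌈q * y⌉ - 1 := by unfold qgDigit; omega
    exact_mod_cast h5
  have rem : 0 < qgRem q 1 n ∧ qgRem q 1 n ≤ 1 := by
    induction n with
    | zero => simp [qgRem]
    | succ n ih =>
      rw [qgRem, dig _ ih.1 ih.2]
      constructor
      · linarith [Int.ceil_lt_add_one (q * qgRem q 1 n)]
      · linarith [Int.le_ceil (q * qgRem q 1 n)]
  exact ⟨rem.1, rem.2, dig _ rem.1 rem.2⟩

theorem alpha_le {q : ℝ} (n : ℕ) : alphaSeq q n ≤ topDigit q := by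
  simp [alphaSeq, quasiGreedy, qgDigit]

theorem alpha_zero {q : ℝ} (hq : 1 < q) : alphaSeq q 0 = topDigit q := by
  obtain ⟨hA, h1, h2⟩ := topDigit_spec hq
  have h : ⌈q⌉ = (topDigit q : ℤ) + 1 := by
    rw [Int.ceil_eq_iff]; push_cast; constructor <;> linarith
  have h3 := (qgRem_one hq 0).2.2
  simp only [qgRem, mul_one, h] at h3
  push_cast at h3
  have : (alphaSeq q 0 : ℝ) = topDigit q := by linarith
  exact_mod_cast this

theorem qgRem_eq_val {q : ℝ} (hq : 1 < q) (n : ℕ) : qgRem q 1 n = val q (tail n (alphaSeq q)) :=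
  val_of_orbit hq (A := topDigit q) (y := fun i => qgRem q 1 (n + i)) (fun _ => alpha_le _)
    (fun _ => rfl) (fun _ => (qgRem_one hq _).1.le) (fun _ => (qgRem_one hq _).2.1)

theorem val_alpha {q : ℝ} (hq : 1 < q) : val q (alphaSeq q) = 1 := by
  have h := qgRem_eq_val hq 0
  have ht : tail 0 (alphaSeq q) = alphaSeq q := by funext i; simp [tail]
  rw [ht] at h
  exact h.symm

theorem alpha_infinite {q : ℝ} (hq : 1 < q) : InfiniteSeq (alphaSeq q) := by
  intro N
  by_contra hc
  push Not at hc
  have h := (qgRem_one hq N).1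
  rw [qgRem_eq_val hq] at h
  have : val q (tail N (alphaSeq q)) = 0 := by
    have : ∀ i, tail N (alphaSeq q) i = 0 := fun i => hc _ (by omega)
    simp [val, this]
  linarith

/-- Exceeding the quasi-greedy expansion at position `n` pushes the partial sum up to at
least `1`. -/
theorem one_le_sum_of_alpha_lt {q : ℝ} (hq : 1 < q) {e : ℕ → ℕ} {n : ℕ}
    (h1 : ∀ i < n, alphaSeq q i = e i) (h2 : alphaSeq q n < e n) :
    1 ≤ ∑ i ∈ Finset.range (n + 1), (e i : ℝ) / q ^ (i + 1) := by
  have hq0 : 0 < q := by linarith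
  have hs := val_split hq (A := topDigit q) (c := alphaSeq q) alpha_le n
  rw [val_alpha hq, ← qgRem_eq_val hq n] at hs
  rw [Finset.sum_congr rfl fun i hi => by rw [h1 i (Finset.mem_range.1 hi)]] at hs
  rw [Finset.sum_range_succ, hs]
  refine add_le_add_right ?_ _
  have h3 : (alphaSeq q n : ℝ) + 1 ≤ e n := by exact_mod_cast h2
  have h4 := (qgRem_one hq n).2.2
  have h5 := Int.le_ceil (q * qgRem q 1 n)
  rw [div_le_div_iff₀ (by positivity) (by positivity), pow_succ]
  have : q * qgRem q 1 n ≤ e n := by linarith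
  nlinarith [mul_le_mul_of_nonneg_right this (pow_pos hq0 n).le]

theorem one_le_val_of_alpha_le {q : ℝ} (hq : 1 < q) {A : ℕ} {e : ℕ → ℕ} (he : ∀ i, e i ≤ A)
    (h : lexLe (alphaSeq q) e) : 1 ≤ val q e := by
  rcases h with ⟨n, h1, h2⟩ | rfl
  · exact (one_le_sum_of_alpha_lt hq h1 h2).trans (sum_le_val hq he _)
  · exact (val_alpha hq).ge

/-- The quasi-greedy expansion is the largest infinite expansion of `1`. -/
theorem lexLe_alpha_of_infinite {q : ℝ} (hq : 1 < q) {A : ℕ} {e : ℕ → ℕ} (he : ∀ i, e i ≤ A)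
    (hinf : InfiniteSeq e) (hv : val q e ≤ 1) : lexLe e (alphaSeq q) := by
  refine lexLe_of_not_lexLt ?_
  rintro ⟨n, h1, h2⟩
  have h3 := one_le_sum_of_alpha_lt hq h1 h2
  have h4 := val_split hq he (n + 1)
  have h5 := val_tail_pos hq he hinf (n + 1)
  have hq0 : 0 < q := by linarith
  have h6 : 0 < val q (tail (n + 1) e) / q ^ (n + 1) := by positivity
  linarith

theorem infinite_tail {c : ℕ → ℕ} (h : InfiniteSeq c) (n : ℕ) : InfiniteSeq (tail n c) := by
  intro N
  obtain ⟨i, hi, hci⟩ := h (n + N)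
  exact ⟨i - n, by omega, by simpa [tail, show n + (i - n) = i by omega] using hci⟩

theorem tail_alpha_le {q : ℝ} (hq : 1 < q) (k : ℕ) :
    lexLe (tail k (alphaSeq q)) (alphaSeq q) := by
  refine lexLe_alpha_of_infinite hq (A := topDigit q) (fun i => alpha_le _)
    (infinite_tail (alpha_infinite hq) k) ?_
  rw [← qgRem_eq_val hq]
  exact (qgRem_one hq k).2.1

theorem alpha_strictMono {q r : ℝ} (hq : 1 < q) (hqr : q < r) :
    lexLt (alphaSeq q) (alphaSeq r) := by
  by_contra hc
  have h1 := one_le_val_of_alpha_le (hq.trans hqr) (A := topDigit q) alpha_le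
    (lexLe_of_not_lexLt hc)
  obtain ⟨hA, -, -⟩ := topDigit_spec hq
  have h2 := val_strictAnti hq hqr (A := topDigit q) (c := alphaSeq q) alpha_le (n := 0)
    (by rw [alpha_zero hq]; omega)
  rw [val_alpha hq] at h2
  linarith

/-- Left continuity of `q ↦ α(q)`. -/
theorem exists_alpha_agree {r : ℝ} (hr : 1 < r) (k : ℕ) :
    ∃ q, 1 < q ∧ q < r ∧ ⌈q⌉ = ⌈r⌉ ∧ ∀ i < k, alphaSeq q i = alphaSeq r i := by
  obtain ⟨hA, h1, h2⟩ := topDigit_spec hr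
  have hr0 : 0 < r := by linarith
  have hlt : ∑ i ∈ Finset.range k, (alphaSeq r i : ℝ) / r ^ (i + 1) < 1 := by
    have h3 := val_split hr (A := topDigit r) (c := alphaSeq r) alpha_le k
    rw [val_alpha hr] at h3
    have h4 := val_tail_pos hr (A := topDigit r) alpha_le (alpha_infinite hr) k
    have : 0 < val r (tail k (alphaSeq r)) / r ^ k := by positivity
    linarith
  have hcont : ContinuousAt
      (fun q : ℝ => ∑ i ∈ Finset.range k, (alphaSeq r i : ℝ) / q ^ (i + 1)) r :=
    tendsto_finsetSum _ fun i _ =>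
      tendsto_const_nhds.div (Filter.tendsto_id.pow _) (pow_pos hr0 _).ne'
  have hev : ∀ᶠ q in nhdsWithin r (Set.Iio r),
      ∑ i ∈ Finset.range k, (alphaSeq r i : ℝ) / q ^ (i + 1) < 1 ∧ 1 < q ∧
        (topDigit r : ℝ) < q ∧ q < r :=
    (((hcont.eventually (gt_mem_nhds hlt)).and
      ((lt_mem_nhds hr).and (lt_mem_nhds h1))).filter_mono nhdsWithin_le_nhds).and
      self_mem_nhdsWithin |>.mono fun q hq => ⟨hq.1.1, hq.1.2.1, hq.1.2.2, hq.2⟩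
  obtain ⟨q, hq1, hq2, hq3, hq4⟩ := hev.exists
  refine ⟨q, hq2, hq4, ceil_eq_of_topDigit hr hq3 (by linarith), ?_⟩
  obtain ⟨n, hn, hn'⟩ := alpha_strictMono hq2 hq4
  rcases Nat.lt_or_ge n k with h | h
  · exfalso
    have h5 := one_le_sum_of_alpha_lt hq2 hn hn'
    have hq0 : 0 < q := by linarith
    have h6 : ∑ i ∈ Finset.range (n + 1), (alphaSeq r i : ℝ) / q ^ (i + 1) ≤
        ∑ i ∈ Finset.range k, (alphaSeq r i : ℝ) / q ^ (i + 1) :=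
      Finset.sum_le_sum_of_subset_of_nonneg (Finset.range_mono (by omega))
        fun i _ _ => by positivity
    linarith
  · exact fun i hi => hn i (by omega)

/-! ### Lexicographic characterization of univoque sequences -/

theorem exists_expansion {q : ℝ} (hq : 1 < q) {x : ℝ} (h0 : 0 ≤ x)
    (h1 : x ≤ topDigit q / (q - 1)) : ∃ c : ℕ → ℕ, (∀ i, c i ≤ topDigit q) ∧ val q c = x := by
  obtain ⟨hA, hA1, hA2⟩ := topDigit_spec hq
  have hq1 : 0 < q - 1 := by linarith
  have hone : 1 ≤ topDigit q / (q - 1) := by rw [le_div_iff₀ hq1]; linarith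
  have hrem : ∀ n, 0 ≤ gRem q x n ∧ gRem q x n ≤ topDigit q / (q - 1) := by
    intro n
    induction n with
    | zero => exact ⟨h0, h1⟩
    | succ n ih =>
      have hp : 0 ≤ q * gRem q x n := mul_nonneg (by linarith) ih.1
      have hfl := Nat.floor_le hp
      have hfl' := Nat.lt_floor_add_one (q * gRem q x n)
      rw [gRem, gDigit]
      rcases le_total (topDigit q) ⌊q * gRem q x n⌋₊ with h | h
      · rw [min_eq_left h]
        have : (topDigit q : ℝ) ≤ ⌊q * gRem q x n⌋₊ := by exact_mod_cast h
        refine ⟨by linarith, ?_⟩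
        have h3 := mul_le_mul_of_nonneg_left ih.2 (by linarith : 0 ≤ q)
        have h4 : q * (topDigit q / (q - 1)) - topDigit q = topDigit q / (q - 1) := by
          field_simp; ring
        linarith
      · rw [min_eq_right h]
        constructor <;> linarith
  refine ⟨greedy q x, fun i => by simp [greedy, gDigit], ?_⟩
  exact (val_of_orbit hq (A := topDigit q) (y := gRem q x) (fun i => by simp [gDigit])
    (fun n => rfl) (fun n => (hrem n).1) (fun n => (hrem n).2)).symm

/-- `c` has digits in `{0, …, A}` and satisfies the two families of strict lexicographic
inequalities against `β` that characterize univoque sequences. -/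
def Adm (A : ℕ) (β c : ℕ → ℕ) : Prop :=
  (∀ i, c i ≤ A) ∧ (∀ n, c n < A → lexLt (tail (n + 1) c) β) ∧
    ∀ n, 0 < c n → lexLt (reflect A (tail (n + 1) c)) β

theorem reflect_le {A : ℕ} {c : ℕ → ℕ} (i : ℕ) : reflect A c i ≤ A := Nat.sub_le _ _

theorem tail_reflect (A n : ℕ) (c : ℕ → ℕ) : tail n (reflect A c) = reflect A (tail n c) := rfl

theorem Adm.reflect {A : ℕ} {β c : ℕ → ℕ} (h : Adm A β c) : Adm A β (reflect A c) := by
  obtain ⟨h1, h2, h3⟩ := h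
  refine ⟨fun i => reflect_le i, fun n hn => ?_, fun n hn => ?_⟩
  · rw [tail_reflect]
    exact h3 n (by have := h1 n; simp only [_root_.reflect] at hn; omega)
  · rw [tail_reflect, reflect_reflect (c := tail (n + 1) c) (fun i => h1 _)]
    exact h2 n (by have := h1 n; simp only [_root_.reflect] at hn; omega)

/-- If `β` is an infinite expansion of `1` and `c`, as well as every tail of `c` following a digit
`< A`, is lexicographically smaller than `β`, then `c` has value `< 1`. -/
theorem val_lt_one {q : ℝ} (hq : 1 < q) {A : ℕ} {β c : ℕ → ℕ} (hβ : ∀ i, β i ≤ A)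
    (hinf : InfiniteSeq β) (hβ1 : val q β = 1) (hc : ∀ i, c i ≤ A) (h : lexLt c β)
    (h' : ∀ n, c n < A → lexLt (tail (n + 1) c) β) : val q c < 1 := by
  have hq0 : 0 < q := by linarith
  -- one step: compare at the first difference and pass to the tail behind it
  have step : ∀ c : ℕ → ℕ, (∀ i, c i ≤ A) → lexLt c β →
      (∀ n, c n < A → lexLt (tail (n + 1) c) β) → ∃ n, lexLt (tail (n + 1) c) β ∧
        val q c - 1 < (val q (tail (n + 1) c) - 1) / q ^ (n + 1) := by
    rintro c hc ⟨n, h1, h2⟩ h'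
    refine ⟨n, h' n (h2.trans_le (hβ n)), ?_⟩
    have e1 := val_split hq hc (n + 1)
    have e2 := val_split hq hβ (n + 1)
    rw [Finset.sum_range_succ] at e1 e2
    rw [Finset.sum_congr rfl fun i hi => by rw [h1 i (Finset.mem_range.1 hi)]] at e1
    have h3 := val_tail_pos hq hβ hinf (n + 1)
    have h4 : 0 < val q (tail (n + 1) β) / q ^ (n + 1) := by positivity
    have h5 : (c n : ℝ) + 1 ≤ β n := by exact_mod_cast h2
    have h6 : (c n : ℝ) / q ^ (n + 1) + 1 / q ^ (n + 1) ≤ β n / q ^ (n + 1) := by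
      rw [← add_div]; gcongr
    rw [sub_div]
    linarith
  have bound : ∀ m : ℕ, ∀ c : ℕ → ℕ, (∀ i, c i ≤ A) → lexLt c β →
      (∀ n, c n < A → lexLt (tail (n + 1) c) β) → val q c - 1 ≤ (A / (q - 1)) / q ^ m := by
    intro m
    induction m with
    | zero =>
      intro c hc _ _
      have := val_le hq hc
      simp only [pow_zero, div_one]
      linarith
    | succ m ih =>
      intro c hc h h'
      obtain ⟨n, h1, h2⟩ := step c hc h h'
      have h3 := ih (tail (n + 1) c) (fun i => hc _) h1 fun k hk => by
        rw [tail_tail]; exact h' (n + 1 + k) hk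
      refine h2.le.trans ?_
      have hq1 : 0 < q - 1 := by linarith
      have h4 : 0 ≤ (A / (q - 1) : ℝ) / q ^ m := by positivity
      calc (val q (tail (n + 1) c) - 1) / q ^ (n + 1) ≤ ((A / (q - 1)) / q ^ m) / q ^ (n + 1) := by
            gcongr
        _ ≤ ((A / (q - 1)) / q ^ m) / q := by
            gcongr
            exact le_self_pow₀ hq.le (by omega)
        _ = _ := by rw [div_div, ← pow_succ]
  have nonpos : ∀ c : ℕ → ℕ, (∀ i, c i ≤ A) → lexLt c β →
      (∀ n, c n < A → lexLt (tail (n + 1) c) β) → val q c - 1 ≤ 0 := by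
    intro c hc h h'
    have hp : Filter.Tendsto (fun n : ℕ => (A / (q - 1) : ℝ) * (1 / q) ^ n) Filter.atTop
        (nhds ((A / (q - 1)) * 0)) :=
      (tendsto_pow_atTop_nhds_zero_of_lt_one (by positivity) ((div_lt_one hq0).2 hq)).const_mul _
    rw [mul_zero] at hp
    refine ge_of_tendsto' hp fun m => ?_
    rw [one_div, inv_pow, ← div_eq_mul_inv]
    exact bound m c hc h h'
  obtain ⟨n, h1, h2⟩ := step c hc h h'
  have h3 := nonpos (tail (n + 1) c) (fun i => hc _) h1 fun k hk => by
    rw [tail_tail]; exact h' (n + 1 + k) hk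
  have h4 : (val q (tail (n + 1) c) - 1) / q ^ (n + 1) ≤ 0 :=
    div_nonpos_of_nonpos_of_nonneg h3 (by positivity)
  linarith

theorem mem_USeq_iff {q : ℝ} (hq : 1 < q) (c : ℕ → ℕ) :
    c ∈ USeq q ↔ (∀ i, c i ≤ topDigit q) ∧
      ∀ c' : ℕ → ℕ, (∀ i, c' i ≤ topDigit q) → val q c' = val q c → c' = c := by
  simp only [USeq, Set.mem_ofPred_eq, isExpansion_iff hq]
  constructor
  · rintro ⟨x, ⟨h1, rfl⟩, h2⟩
    exact ⟨h1, fun c' h3 h4 => h2 c' ⟨h3, h4.symm⟩⟩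
  · rintro ⟨h1, h2⟩
    exact ⟨_, ⟨h1, rfl⟩, fun c' h => h2 c' h.1 h.2.symm⟩

theorem mem_USeq_of_adm {q : ℝ} (hq : 1 < q) {β c : ℕ → ℕ} (hβ : ∀ i, β i ≤ topDigit q)
    (hinf : InfiniteSeq β) (hβ1 : val q β = 1) (h : Adm (topDigit q) β c) : c ∈ USeq q := by
  have hq0 : 0 < q := by linarith
  -- no admissible sequence has a lexicographically larger companion of the same value
  have key : ∀ c c' : ℕ → ℕ, Adm (topDigit q) β c → (∀ i, c' i ≤ topDigit q) →
      val q c' = val q c → ¬ lexLt c c' := by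
    rintro c c' ⟨h1, h2, -⟩ h3 hv ⟨n, h4, h5⟩
    have h6 := val_lt_one hq hβ hinf hβ1 (c := tail (n + 1) c) (fun i => h1 _)
        (h2 n (h5.trans_le (h3 n))) fun k hk => by
      rw [tail_tail]; exact h2 (n + 1 + k) hk
    have e1 := val_split hq h1 (n + 1)
    have e2 := val_split hq h3 (n + 1)
    rw [Finset.sum_range_succ] at e1 e2
    rw [Finset.sum_congr rfl fun i hi => by rw [h4 i (Finset.mem_range.1 hi)]] at e1
    have h7 := val_nonneg hq (tail (n + 1) c')
    have h8 : 0 ≤ val q (tail (n + 1) c') / q ^ (n + 1) := by positivity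
    have h9 : (c n : ℝ) + 1 ≤ c' n := by exact_mod_cast h5
    have h10 : (c n : ℝ) / q ^ (n + 1) + 1 / q ^ (n + 1) ≤ c' n / q ^ (n + 1) := by
      rw [← add_div]; gcongr
    have h11 : val q (tail (n + 1) c) / q ^ (n + 1) < 1 / q ^ (n + 1) := by gcongr
    linarith
  rw [mem_USeq_iff hq]
  refine ⟨h.1, fun c' hc' hv => ?_⟩
  have k1 := key c c' h hc' hv
  have k2 := key _ (reflect (topDigit q) c') h.reflect (fun i => reflect_le i)
    (by rw [val_reflect hq hc', val_reflect hq h.1, hv])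
  rw [lexLt_reflect_iff h.1 hc'] at k2
  exact lexLe_antisymm (lexLe_of_not_lexLt k1) (lexLe_of_not_lexLt k2)

theorem reflect_mem_USeq {q : ℝ} (hq : 1 < q) {c : ℕ → ℕ} (h : c ∈ USeq q) :
    reflect (topDigit q) c ∈ USeq q := by
  rw [mem_USeq_iff hq] at h ⊢
  refine ⟨fun i => reflect_le i, fun c' hc' hv => ?_⟩
  rw [← h.2 (reflect (topDigit q) c') (fun i => reflect_le i)
    (by rw [val_reflect hq hc', hv, val_reflect hq h.1]; ring), reflect_reflect hc']

theorem adm_of_mem_USeq {q : ℝ} (hq : 1 < q) {c : ℕ → ℕ} (h : c ∈ USeq q) :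
    Adm (topDigit q) (alphaSeq q) c := by
  have hq0 : 0 < q := by linarith
  have hq1 : 0 < q - 1 := by linarith
  have key : ∀ c ∈ USeq q, ∀ n, c n < topDigit q → lexLt (tail (n + 1) c) (alphaSeq q) := by
    intro c hc n hn
    rw [mem_USeq_iff hq] at hc
    by_contra hlex
    have h1 : 1 ≤ val q (tail (n + 1) c) :=
      one_le_val_of_alpha_le hq (fun i => hc.1 _) (lexLe_of_not_lexLt hlex)
    have h2 := val_le hq (c := tail (n + 1) c) (fun i => hc.1 _)
    obtain ⟨e, he, hev⟩ := exists_expansion hq (x := val q (tail (n + 1) c) - 1) (by linarith)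
      (by linarith)
    -- a second expansion: raise the digit `c n` by one and expand the remaining value by `e`
    let c' : ℕ → ℕ := fun i => if i < n then c i else if i = n then c n + 1 else e (i - (n + 1))
    have hc' : ∀ i, c' i ≤ topDigit q := by
      intro i
      simp only [c']
      split_ifs
      · exact hc.1 i
      · omega
      · exact he _
    have ht : tail (n + 1) c' = e := by
      funext i
      simp only [tail, c']
      rw [if_neg (by omega), if_neg (by omega), Nat.add_sub_cancel_left]
    have hv : val q c' = val q c := by
      rw [val_split hq hc' (n + 1), val_split hq hc.1 (n + 1), ht, hev, Finset.sum_range_succ,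
        Finset.sum_range_succ, Finset.sum_congr rfl fun i hi => by
          rw [show c' i = c i from if_pos (Finset.mem_range.1 hi)]]
      have : c' n = c n + 1 := by simp [c']
      rw [this]
      push_cast
      ring
    have := congrFun (hc.2 c' hc' hv) n
    simp [c'] at this
  have hd := ((mem_USeq_iff hq c).1 h).1
  refine ⟨hd, key c h, fun n hn => ?_⟩
  have := key _ (reflect_mem_USeq hq h) n (by have := hd n; simp only [reflect]; omega)
  exact this

/-! ### The strict reflection condition -/

/-- The condition `overline{α_{k+1}(r) α_{k+2}(r) …} < α(r)` for all `k ≥ 1`, which turns out to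
describe the closure of the set of univoque bases. -/
def StrictRefl (r : ℝ) : Prop :=
  ∀ k, 1 ≤ k → lexLt (reflect (topDigit r) (tail k (alphaSeq r))) (alphaSeq r)

/-- If the strict reflection condition fails, it fails behind a positive digit: at the smallest
failing index the preceding digit cannot vanish. -/
theorem exists_failure {r : ℝ} (hr : 1 < r) (h : ¬ StrictRefl r) :
    ∃ k, 1 ≤ k ∧ 0 < alphaSeq r (k - 1) ∧
      lexLe (alphaSeq r) (reflect (topDigit r) (tail k (alphaSeq r))) := by
  obtain ⟨hA, -, -⟩ := topDigit_spec hr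
  have h' : ∃ k, 1 ≤ k ∧ ¬ lexLt (reflect (topDigit r) (tail k (alphaSeq r))) (alphaSeq r) := by
    unfold StrictRefl at h; push Not at h; exact h
  classical
  obtain ⟨hk1, hk2⟩ := Nat.find_spec h'
  have hmin := fun m => Nat.find_min h' (m := m)
  generalize Nat.find h' = k at *
  refine ⟨k, hk1, Nat.pos_of_ne_zero fun h0 => ?_, lexLe_of_not_lexLt hk2⟩
  have hk : k ≠ 1 := by
    rintro rfl
    have := alpha_zero hr
    simp at h0; omega
  refine hmin (k - 1) (by omega) ⟨by omega, fun hlt => ?_⟩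
  have h1 : ∀ i < 1, reflect (topDigit r) (tail (k - 1) (alphaSeq r)) i = alphaSeq r i := by
    intro i hi
    obtain rfl : i = 0 := by omega
    simp [reflect, tail, h0, alpha_zero hr]
  have h2 := lexLt_tail 1 hlt h1
  rw [tail_reflect, tail_tail, Nat.sub_add_cancel hk1] at h2
  exact hk2 (lexLt_of_lt_of_le h2 (tail_alpha_le hr 1))

theorem strictRefl_of_univ {q : ℝ} (h : q ∈ UnivBases) : StrictRefl q := by
  obtain ⟨hq, c, hc, hu⟩ := h
  have e : alphaSeq q = c := hu _ ((isExpansion_iff hq _ _).2 ⟨alpha_le, (val_alpha hq).symm⟩)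
  have hmem : alphaSeq q ∈ USeq q := by
    rw [e]
    exact ⟨1, hc, hu⟩
  have hadm := adm_of_mem_USeq hq hmem
  by_contra hn
  obtain ⟨k, hk, hpos, hle⟩ := exists_failure hq hn
  have := hadm.2.2 (k - 1) hpos
  rw [Nat.sub_add_cancel hk] at this
  exact not_lexLt_of_lexLe hle this

theorem univ_of_mem_USeq {q : ℝ} (hq : 1 < q) {d : ℕ → ℕ} (hd : d ∈ USeq q) (hv : val q d = 1) :
    q ∈ UnivBases := by
  rw [mem_USeq_iff hq] at hd
  refine ⟨hq, d, (isExpansion_iff hq _ _).2 ⟨hd.1, hv.symm⟩, fun c' hc' => ?_⟩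
  replace hc' := (isExpansion_iff hq c' 1).1 hc'
  exact hd.2 c' hc'.1 (by rw [hv, ← hc'.2])

/-- If the reflection condition fails at `k`, then `𝒰_q' = 𝒰_r'` for every `q < r` so close to `r`
that `α(q)` and `α(r)` share their first `k` digits. -/
theorem strictRefl_of_nonempty {r : ℝ} (hr : 1 < r)
    (h : ∀ q : ℝ, 1 < q → q < r → ⌈q⌉ = ⌈r⌉ → (USeq r \ USeq q).Nonempty) : StrictRefl r := by
  by_contra hn
  obtain ⟨k, hk, hpos, hle⟩ := exists_failure hr hn
  obtain ⟨q, hq, hqr, hceil, hagree⟩ := exists_alpha_agree hr k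
  have hA := topDigit_congr hceil
  obtain ⟨c, hc, hcq⟩ := h q hq hqr hceil
  apply hcq
  have key : ∀ c, Adm (topDigit r) (alphaSeq r) c → ∀ n, c n < topDigit r →
      lexLt (tail (n + 1) c) (alphaSeq q) := by
    intro c hadm n hcn
    by_contra hlex
    have h1 := hadm.2.1 n hcn
    have h2 := lex_squeeze (lexLe_of_not_lexLt hlex) h1 hagree
    have h3 := lexLt_tail k h1 h2
    rw [tail_tail] at h3
    have h4 : 0 < c (n + k) := by
      have := h2 (k - 1) (by omega)
      simp only [tail] at this
      rw [show n + 1 + (k - 1) = n + k by omega] at this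
      rwa [this]
    have h5 := hadm.2.2 (n + k) h4
    have h6 := (lexLt_reflect_iff (A := topDigit r) (a := tail k (alphaSeq r))
      (b := tail (n + 1 + k) c) (fun i => alpha_le _) (fun i => hadm.1 _)).2 h3
    rw [show n + k + 1 = n + 1 + k by omega] at h5
    exact lexLt_irrefl _ (lexLt_trans (lexLt_of_le_of_lt hle h6) h5)
  have hadm := adm_of_mem_USeq hr hc
  refine mem_USeq_of_adm hq alpha_le (alpha_infinite hq) (val_alpha hq) ?_
  rw [hA]
  refine ⟨hadm.1, key c hadm, fun n hn => ?_⟩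
  exact key _ hadm.reflect n (by have := hadm.1 n; simp only [reflect]; omega)

theorem lexLe_tail_of_limit {d : ℕ → ℕ → ℕ} {γ : ℕ → ℕ}
    (hlim : ∀ N, ∀ᶠ n in Filter.atTop, ∀ i < N, d n i = γ i) (k : ℕ)
    (h : ∀ n, lexLe (tail k (d n)) (d n)) : lexLe (tail k γ) γ := by
  refine lexLe_of_not_lexLt ?_
  rintro ⟨m, h1, h2⟩
  obtain ⟨n, hn⟩ := (hlim (k + m + 1)).exists
  refine not_lexLt_of_lexLe (h n) ⟨m, fun i hi => ?_, ?_⟩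
  · have := h1 i hi
    simp only [tail] at *
    rw [hn i (by omega), hn (k + i) (by omega), this]
  · simp only [tail] at *
    rw [hn m (by omega), hn (k + m) (by omega)]; exact h2

/-- A point of the closure of the univoque bases satisfies the strict reflection condition. -/
theorem strictRefl_of_closure {r : ℝ} (hr : 1 < r) (h : r ∈ closure UnivBases) :
    StrictRefl r := by
  obtain ⟨hA, hA1, hA2⟩ := topDigit_spec hr
  set A := topDigit r with hAdef
  rcases hA2.eq_or_lt with hint | hlt
  · -- an integer base has `α(r) = A^∞`
    have hrem : ∀ n, qgRem r 1 n = 1 ∧ alphaSeq r n = A := by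
      have hd : ∀ n, qgRem r 1 n = 1 → alphaSeq r n = A := by
        intro n hn
        have h1 := (qgRem_one hr n).2.2
        rw [hn, mul_one, hint] at h1
        rw [show ((A : ℝ) + 1) = ((A + 1 : ℤ) : ℝ) by push_cast; ring, Int.ceil_intCast] at h1
        push_cast at h1
        have h2 : (alphaSeq ((A : ℝ) + 1) n : ℝ) = A := by linarith
        rw [← hint] at h2
        exact_mod_cast h2
      intro n
      induction n with
      | zero => exact ⟨rfl, hd 0 rfl⟩
      | succ n ih =>
        have h1 : qgRem r 1 (n + 1) = 1 := by
          have : qgRem r 1 (n + 1) = r * qgRem r 1 n - alphaSeq r n := rfl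
          rw [this, ih.1, ih.2]; linarith
        exact ⟨h1, hd _ h1⟩
    intro k _
    refine ⟨0, by simp, ?_⟩
    simp only [reflect, tail, (hrem _).2]
    omega
  · by_contra hfail
    obtain ⟨k, hk, hpos, hle⟩ := exists_failure hr hfail
    obtain ⟨q', hq', hlim'⟩ := mem_closure_iff_seq_limit.1 h
    obtain ⟨n0, hn0⟩ := Filter.eventually_atTop.1
      ((hlim'.eventually (lt_mem_nhds hA1)).and (hlim'.eventually (gt_mem_nhds hlt)))
    -- discard finitely many terms, so that all bases have the same alphabet as `r`
    obtain ⟨q, hq, hlim, hceil⟩ : ∃ q : ℕ → ℝ, (∀ n, q n ∈ UnivBases) ∧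
        Filter.Tendsto q Filter.atTop (nhds r) ∧ ∀ n, ⌈q n⌉ = ⌈r⌉ :=
      ⟨fun n => q' (n + n0), fun n => hq' _, hlim'.comp (Filter.tendsto_add_atTop_nat n0),
        fun n => ceil_eq_of_topDigit hr (hn0 _ (by omega)).1 (hn0 _ (by omega)).2.le⟩
    have hcpt : IsCompact (Set.univ.pi fun _ : ℕ => Set.Iic A) :=
      isCompact_univ_pi fun _ => (Set.finite_Iic A).isCompact
    have hdig : ∀ n i, alphaSeq (q n) i ≤ A := fun n i =>
      (alpha_le i).trans_eq (topDigit_congr (hceil n))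
    obtain ⟨γ, hγ, φ, hφ, hγlim⟩ := hcpt.tendsto_subseq (x := fun n => alphaSeq (q n))
      fun n i _ => hdig n i
    have hγA : ∀ i, γ i ≤ A := fun i => hγ i (Set.mem_univ i)
    have hpt : ∀ i, ∀ᶠ n in Filter.atTop, alphaSeq (q (φ n)) i = γ i := by
      intro i
      have := (tendsto_pi_nhds.1 hγlim) i
      rw [nhds_discrete, Filter.tendsto_pure] at this
      exact this
    have hpre : ∀ N, ∀ᶠ n in Filter.atTop, ∀ i < N, alphaSeq (q (φ n)) i = γ i := fun N =>
      (Filter.eventually_all_finite (Set.finite_Iio N)).2 fun i _ => hpt i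
    have hval : val r γ = 1 := by
      have h1 := tendsto_val hr (hlim.comp hφ.tendsto_atTop) (A := A)
        (c := fun n => alphaSeq (q (φ n))) (Filter.Eventually.of_forall fun n i => hdig _ i) hpt
      refine tendsto_nhds_unique h1 (tendsto_const_nhds.congr fun n => ?_)
      exact (val_alpha (hq _).1).symm
    have hγtail : ∀ k, lexLe (tail k γ) γ := fun k =>
      lexLe_tail_of_limit hpre k fun n => tail_alpha_le (hq _).1 k
    have hγrefl : ∀ k, 1 ≤ k → lexLe (reflect A (tail k γ)) γ := by
      intro k hk
      refine lexLe_of_not_lexLt ?_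
      rintro ⟨m, h1, h2⟩
      obtain ⟨n, hn⟩ := (hpre (k + m + 1)).exists
      have hs := strictRefl_of_univ (hq (φ n)) k hk
      rw [topDigit_congr (hceil _)] at hs
      refine not_lexLt_of_lexLe (Or.inl hs) ⟨m, fun i hi => ?_, ?_⟩
      · have := h1 i hi
        simp only [tail, reflect] at *
        rw [hn i (by omega), hn (k + i) (by omega), this]
      · simp only [tail, reflect] at *
        rw [hn m (by omega), hn (k + m) (by omega)]; exact h2
    have hγinf : InfiniteSeq γ := by
      intro N
      by_contra hc
      push Not at hc
      have h1 := hγrefl (N + 1) (by omega)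
      have hz : reflect A (tail (N + 1) γ) = fun _ => A := by
        funext i
        simp [reflect, tail, hc (N + 1 + i) (by omega)]
      rw [hz] at h1
      -- the constant sequence `A` is maximal, so `γ` would equal it
      rcases h1 with ⟨m, -, h2⟩ | h2
      · exact absurd (hγA m) (by simpa using h2)
      · have := congrFun h2 N
        have := hc N le_rfl
        simp at *
        omega
    have hγα : γ = alphaSeq r := by
      refine lexLe_antisymm (lexLe_alpha_of_infinite hr hγA hγinf hval.le)
        (lexLe_of_not_lexLt fun hlt => ?_)
      have := val_lt_one hr (A := A) (β := alphaSeq r) alpha_le (alpha_infinite hr) (val_alpha hr)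
        hγA hlt fun n _ => lexLt_of_le_of_lt (hγtail _) hlt
      linarith
    subst hγα
    obtain ⟨n, hn⟩ := (hpre (2 * k)).exists
    have hqU := hq (φ n)
    have hqc := hceil (φ n)
    generalize q (φ n) = s at hn hqU hqc
    have hs := strictRefl_of_univ hqU k hk
    rw [topDigit_congr hqc] at hs
    have hsd : ∀ i, alphaSeq s i ≤ A := fun i => (alpha_le i).trans_eq (topDigit_congr hqc)
    rcases lt_trichotomy s r with hsr | rfl | hsr
    · have hlt := alpha_strictMono hqU.1 hsr
      have h1 := lexLt_tail k hlt fun i hi => hn i (by omega)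
      have h2 := (lexLt_reflect_iff (A := A) (a := tail k (alphaSeq r))
        (b := tail k (alphaSeq s)) (fun i => alpha_le _) (fun i => hsd _)).2 h1
      exact lexLt_irrefl _ (lexLt_trans hlt (lexLt_trans (lexLt_of_le_of_lt hle h2) hs))
    · exact not_lexLt_of_lexLe hle hs
    · -- here `α(r)` is its own reflected tail, hence periodic with period `2 k`
      have heq := lexLe_antisymm hle (hγrefl k hk)
      have hper : ∀ i, alphaSeq r (2 * k + i) = alphaSeq r i := by
        intro i
        have h1 := congrFun heq i
        have h2 := congrFun heq (k + i)
        have h3 := hγA (2 * k + i)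
        have h4 := hγA (k + i)
        simp only [reflect, tail] at h1 h2
        rw [show k + (k + i) = 2 * k + i by ring] at h2
        omega
      obtain ⟨m, h1, h2⟩ := alpha_strictMono hr hsr
      have hm : 2 * k ≤ m := by
        by_contra hc
        have := hn m (by omega)
        omega
      refine not_lexLt_of_lexLe (tail_alpha_le hqU.1 (2 * k)) ⟨m - 2 * k, fun i hi => ?_, ?_⟩
      · rw [tail, ← h1 i (by omega), ← h1 (2 * k + i) (by omega), hper]
      · have h3 := hper (m - 2 * k)
        rw [show 2 * k + (m - 2 * k) = m by omega] at h3
        rw [tail, show 2 * k + (m - 2 * k) = m by omega, ← h1 (m - 2 * k) (by omega), ← h3]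
        exact h2

/-! ### Block sequences -/

/-- `dd k` is the first position at which the reflected tail of `α` starting at `k` drops
below `α`. -/
def IsDrop (A : ℕ) (α dd : ℕ → ℕ) : Prop :=
  ∀ k, (∀ i < dd k, A - α (k + i) = α i) ∧ A - α (k + dd k) < α (dd k)

/-- The prefix of length `n` is good if every reflected suffix of it is already smaller than the
corresponding prefix of `α`. -/
def Good (dd : ℕ → ℕ) (n : ℕ) : Prop := 0 < n ∧ ∀ k < n, k + dd k < n

/-- There are arbitrarily long good prefixes: if `n` is not good and `k` is the smallest index
whose drop is not visible before `n`, then the position just after that drop is good. -/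
theorem exists_good {A : ℕ} {α dd : ℕ → ℕ} (htail : ∀ k, lexLe (tail k α) α)
    (hdd : IsDrop A α dd) (n : ℕ) : ∃ n', n ≤ n' ∧ Good dd n' := by
  by_cases hg : Good dd (n + 1)
  · exact ⟨n + 1, by omega, hg⟩
  have hbad : ∃ k, k < n + 1 ∧ n + 1 ≤ k + dd k := by
    by_contra hc
    push Not at hc
    exact hg ⟨by omega, hc⟩
  classical
  obtain ⟨hk1, hk2⟩ := Nat.find_spec hbad
  have hmin := fun m => Nat.find_min hbad (m := m)
  generalize Nat.find hbad = k at *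
  refine ⟨k + dd k + 1, by omega, by omega, fun k' hk' => ?_⟩
  rcases lt_trichotomy k' k with h | rfl | h
  · have := hmin k' h
    omega
  · omega
  · by_contra hc
    obtain ⟨u, rfl⟩ := Nat.exists_eq_add_of_lt h
    obtain ⟨h1, h2⟩ := hdd k
    obtain ⟨h3, -⟩ := hdd (k + u + 1)
    refine not_lexLt_of_lexLe (htail (u + 1)) ⟨dd k - (u + 1), fun i hi => ?_, ?_⟩
    · have e1 := h3 i (by omega)
      have e2 := h1 (u + 1 + i) (by omega)
      rw [show k + u + 1 + i = k + (u + 1 + i) by ring] at e1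
      simp only [tail]
      omega
    · have e1 := h3 (dd k - (u + 1)) (by omega)
      rw [show k + u + 1 + (dd k - (u + 1)) = k + dd k by omega] at e1
      simp only [tail]
      rw [show u + 1 + (dd k - (u + 1)) = dd k by omega]
      omega

theorem Good.pos {A : ℕ} {α dd : ℕ → ℕ} (h0 : α 0 = A) (hdd : IsDrop A α dd) {n : ℕ}
    (h : Good dd n) : 0 < α (n - 1) := by
  have hn := h.1
  have h1 := h.2 (n - 1) (by omega)
  have h2 : dd (n - 1) = 0 := by omega
  have h3 := (hdd (n - 1)).2
  rw [h2, h0] at h3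
  simp at h3
  omega

/-- Position `x` written as (block number, offset in the block) for consecutive blocks of lengths
`N 0, N 1, …`. -/
def bst (N : ℕ → ℕ) : ℕ → ℕ × ℕ
  | 0 => (0, 0)
  | x + 1 => if (bst N x).2 + 1 < N (bst N x).1 then ((bst N x).1, (bst N x).2 + 1)
      else ((bst N x).1 + 1, 0)

/-- The concatenation over `i` of the words `α_1 … α_{N i - 1} (α_{N i} - 1)`. -/
def bseq (α N : ℕ → ℕ) (x : ℕ) : ℕ :=
  if (bst N x).2 + 1 < N (bst N x).1 then α (bst N x).2 else α (bst N x).2 - 1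

section blocks

variable {A : ℕ} {α dd N : ℕ → ℕ}

theorem bst_lt (hN : ∀ i, 0 < N i) (x : ℕ) : (bst N x).2 < N (bst N x).1 := by
  induction x with
  | zero => exact hN 0
  | succ x ih =>
    rw [bst]
    split_ifs with h
    · exact h
    · exact hN _

theorem bst_run {x i k : ℕ} (h : bst N x = (i, k)) (t : ℕ) (ht : k + t < N i) :
    bst N (x + t) = (i, k + t) := by
  induction t with
  | zero => exact h
  | succ t ih =>
    have := ih (by omega)
    rw [← add_assoc, bst, this]
    simp only
    rw [if_pos (by omega)]
    rfl

theorem bst_next {x i k : ℕ} (h : bst N x = (i, k)) (hk : k < N i) :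
    bst N (x + (N i - k)) = (i + 1, 0) := by
  have h1 := bst_run h (N i - k - 1) (by omega)
  rw [show x + (N i - k) = x + (N i - k - 1) + 1 by omega, bst, h1]
  simp only
  rw [if_neg (by omega)]

theorem bseq_run {x i k : ℕ} (h : bst N x = (i, k)) (t : ℕ) (ht : k + t + 1 < N i) :
    bseq α N (x + t) = α (k + t) := by
  rw [bseq, bst_run h t (by omega)]
  simp only
  rw [if_pos ht]

theorem bseq_last {x i k : ℕ} (h : bst N x = (i, k)) (t : ℕ) (ht : k + t + 1 = N i) :
    bseq α N (x + t) = α (k + t) - 1 := by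
  rw [bseq, bst_run h t (by omega)]
  simp only
  rw [if_neg (by omega)]

theorem bseq_le (hα : ∀ i, α i ≤ A) (x : ℕ) : bseq α N x ≤ A := by
  have := hα (bst N x).2
  rw [bseq]; split_ifs <;> omega

theorem exists_block_start (hN : ∀ i, 0 < N i) (i : ℕ) : ∃ x, bst N x = (i, 0) := by
  induction i with
  | zero => exact ⟨0, rfl⟩
  | succ i ih =>
    obtain ⟨x, hx⟩ := ih
    exact ⟨_, bst_next hx (hN i)⟩

/-- A tail of a block sequence starting at offset `k` of block `i` is smaller than any `β` which
agrees with `α` on the rest of the block. -/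
theorem bseq_upper (h0 : α 0 = A) (htail : ∀ k, lexLe (tail k α) α) (hdd : IsDrop A α dd)
    (hN : ∀ i, Good dd (N i)) {β : ℕ → ℕ} {x i k : ℕ} (h : bst N x = (i, k))
    (hβ : ∀ t < N i - k, β t = α t) : lexLt (tail x (bseq α N)) β := by
  have hk : k < N i := by
    have := bst_lt (fun i => (hN i).1) x
    rwa [h] at this
  have hp := (hN i).pos h0 hdd
  have hl := bseq_last (α := α) h (N i - k - 1) (by omega)
  rw [show k + (N i - k - 1) = N i - 1 by omega] at hl
  obtain ⟨t, ht, h1, h2⟩ := lexLt_trunc (a := tail x (bseq α N)) (b := tail k α) (b' := α)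
    (n := N i - k - 1) (fun t ht => bseq_run h t (by omega))
    (by simp only [tail]; rw [hl, show k + (N i - k - 1) = N i - 1 by omega]; omega) (htail k)
  exact ⟨t, fun j hj => by rw [h1 j hj, hβ j (by omega)], by rw [hβ t (by omega)]; exact h2⟩

/-- The reflected counterpart. The drop of the reflected tail is visible inside block `i` since the
block is good; decreasing the last digit can only spoil it when the drop sits exactly there, and
then the next block, which starts like `α`, decides by the drop of `α` at `j`. -/
theorem bseq_lower (h0 : α 0 = A) (hα : ∀ i, α i ≤ A) (hdd : IsDrop A α dd)
    (hN : ∀ i, Good dd (N i)) {β : ℕ → ℕ} {x i k M : ℕ} (h : bst N x = (i, k))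
    (hβ : ∀ t < M, β t = α t) (hM : dd k < M)
    (hnext : ∀ j, j = dd k + 1 → k + j = N i → dd j + 1 < N (i + 1) ∧ j + dd j < M) :
    lexLt (reflect A (tail x (bseq α N))) β := by
  have hk : k < N i := by
    have := bst_lt (fun i => (hN i).1) x
    rwa [h] at this
  obtain ⟨h1, h2⟩ := hdd k
  have hg := (hN i).2 k hk
  have hpre : ∀ t < dd k, reflect A (tail x (bseq α N)) t = α t := by
    intro t ht
    simp only [reflect, tail]
    rw [bseq_run h t (by omega), h1 t ht]
  by_cases hcase : k + dd k + 1 = N i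
  · have hl := bseq_last (α := α) h (dd k) hcase
    have hp := (hN i).pos h0 hdd
    rw [← hcase, Nat.add_sub_cancel] at hp
    have hb := hα (k + dd k)
    rcases Nat.lt_or_ge (A - (α (k + dd k) - 1)) (α (dd k)) with hlt | hge
    · refine ⟨dd k, fun t ht => ?_, ?_⟩
      · rw [hpre t ht, hβ t (by omega)]
      · rw [hβ _ hM]
        simp only [reflect, tail]
        rw [hl]; exact hlt
    · obtain ⟨hn1, hn2⟩ := hnext _ rfl (by omega)
      have hst := bst_next h hk
      rw [show N i - k = dd k + 1 by omega] at hst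
      obtain ⟨h3, h4⟩ := hdd (dd k + 1)
      have hrun : ∀ t ≤ dd (dd k + 1), bseq α N (x + (dd k + 1 + t)) = α t := by
        intro t ht
        rw [← add_assoc, bseq_run hst t (by omega), zero_add]
      refine ⟨dd k + 1 + dd (dd k + 1), fun t ht => ?_, ?_⟩
      · rw [hβ t (by omega)]
        rcases lt_trichotomy t (dd k) with ht' | rfl | ht'
        · exact hpre t ht'
        · simp only [reflect, tail]
          rw [hl]; omega
        · obtain ⟨s, rfl⟩ := Nat.exists_eq_add_of_lt ht'
          have e1 := h3 s (by omega)
          have e2 := hrun s (by omega)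
          have e3 := hα (dd k + 1 + s)
          rw [show dd k + 1 + s = dd k + s + 1 by ring] at e1 e2 e3
          simp only [reflect, tail]
          rw [e2]; omega
      · rw [hβ _ hn2]
        simp only [reflect, tail]
        rw [hrun _ le_rfl]
        have := hα (dd k + 1 + dd (dd k + 1))
        have := hα (dd (dd k + 1))
        omega
  · refine ⟨dd k, fun t ht => ?_, ?_⟩
    · rw [hpre t ht, hβ t (by omega)]
    · rw [hβ _ hM]
      simp only [reflect, tail]
      rw [bseq_run h _ (by omega)]; exact h2

/-- Different block lengths give different block sequences. -/
theorem bseq_injective (h0 : α 0 = A) (hdd : IsDrop A α dd) {N' : ℕ → ℕ}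
    (hN : ∀ i, Good dd (N i)) (hN' : ∀ i, Good dd (N' i)) (h : bseq α N = bseq α N') : N = N' := by
  -- at a common block start the first of the two blocks to end reveals its length
  have hle : ∀ (N N' : ℕ → ℕ), (∀ i, Good dd (N i)) → bseq α N = bseq α N' → ∀ x i,
      bst N x = (i, 0) → bst N' x = (i, 0) → N' i ≤ N i := by
    intro N N' hN h x i hx hx'
    by_contra hc
    have hp := (hN i).pos h0 hdd
    have hpos := (hN i).1
    have e1 := bseq_last (α := α) hx (N i - 1) (by omega)
    have e2 := bseq_run (α := α) hx' (N i - 1) (by omega)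
    rw [h, e2] at e1
    simp at e1
    omega
  have key : ∀ i, ∃ x, bst N x = (i, 0) ∧ bst N' x = (i, 0) := by
    intro i
    induction i with
    | zero => exact ⟨0, rfl, rfl⟩
    | succ i ih =>
      obtain ⟨x, h1, h2⟩ := ih
      have e := le_antisymm (hle N' N hN' h.symm x i h2 h1) (hle N N' hN h x i h1 h2)
      refine ⟨x + (N i - 0), bst_next h1 (hN i).1, ?_⟩
      rw [e]
      exact bst_next h2 (hN' i).1
  funext i
  obtain ⟨x, h1, h2⟩ := key i
  exact le_antisymm (hle N' N hN' h.symm x i h2 h1) (hle N N' hN h x i h1 h2)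

end blocks

theorem exists_drop {r : ℝ} (hr : 1 < r) (h : StrictRefl r) :
    ∃ dd, IsDrop (topDigit r) (alphaSeq r) dd := by
  have : ∀ k, ∃ t, (∀ i < t, topDigit r - alphaSeq r (k + i) = alphaSeq r i) ∧
      topDigit r - alphaSeq r (k + t) < alphaSeq r t := by
    intro k
    rcases Nat.eq_zero_or_pos k with rfl | hk
    · refine ⟨0, by simp, ?_⟩
      have := (topDigit_spec hr).1
      rw [add_zero, alpha_zero hr]; omega
    · exact h k hk
  choose dd hdd using this
  exact ⟨dd, hdd⟩

/-! ### The strict reflection condition yields many new univoque sequences -/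

theorem uncountable_of_strictRefl {r : ℝ} (hr : 1 < r) (h : StrictRefl r) :
    ¬ (USeq r \ ⋃ q ∈ {q : ℝ | 1 < q ∧ q < r ∧ ⌈q⌉ = ⌈r⌉}, USeq q).Countable := by
  obtain ⟨dd, hdd⟩ := exists_drop hr h
  have h0 := alpha_zero hr
  have hα : ∀ i, alphaSeq r i ≤ topDigit r := alpha_le
  have htail := tail_alpha_le hr
  have hA := (topDigit_spec hr).1
  choose g hg1 hg2 using exists_good htail hdd
  -- good lengths growing so fast that each block sees all drops relevant for the previous one
  let G : ℕ → ℕ := fun n => Nat.rec (g 0)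
    (fun _ m => g (m + 1 + ∑ j ∈ Finset.range (m + 1), (dd j + 2))) n
  have hGs : ∀ n, G (n + 1) = g (G n + 1 + ∑ j ∈ Finset.range (G n + 1), (dd j + 2)) :=
    fun n => rfl
  have hGgood : ∀ n, Good dd (G n) := by
    intro n
    cases n with
    | zero => exact hg2 0
    | succ n => rw [hGs]; exact hg2 _
  have hGmono : StrictMono G := strictMono_nat_of_lt_succ fun n => by
    have := hg1 (G n + 1 + ∑ j ∈ Finset.range (G n + 1), (dd j + 2))
    rw [hGs]; omega
  have hGdd : ∀ m n, m < n → ∀ j ≤ G m, dd j + 1 < G n := by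
    intro m n hmn j hj
    have h1 := hg1 (G m + 1 + ∑ j ∈ Finset.range (G m + 1), (dd j + 2))
    rw [← hGs] at h1
    have h2 := Finset.single_le_sum (f := fun j => dd j + 2) (fun _ _ => Nat.zero_le _)
      (Finset.mem_range.2 (show j < G m + 1 by omega))
    have h3 := hGmono.monotone (show m + 1 ≤ n by omega)
    omega
  let N : (ℕ → Bool) → ℕ → ℕ := fun b i => G (2 * i + if b i then 1 else 0)
  have hN : ∀ b i, Good dd (N b i) := fun b i => hGgood _
  have hNi : ∀ b i, i ≤ N b i := fun b i =>
    (show i ≤ 2 * i + if b i then 1 else 0 by omega).trans hGmono.le_apply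
  have hNinj : Function.Injective N := by
    intro b b' hb
    funext i
    have h1 := hGmono.injective (congrFun hb i)
    cases hbi : b i <;> cases hbi' : b' i <;> simp [hbi, hbi'] at h1 ⊢
  have hmem : ∀ b, bseq (alphaSeq r) (N b) ∈
      USeq r \ ⋃ q ∈ {q : ℝ | 1 < q ∧ q < r ∧ ⌈q⌉ = ⌈r⌉}, USeq q := by
    intro b
    have hup : ∀ x, lexLt (tail x (bseq (alphaSeq r) (N b))) (alphaSeq r) := fun x =>
      bseq_upper h0 htail hdd (hN b) (i := (bst (N b) x).1) (k := (bst (N b) x).2) rfl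
        fun _ _ => rfl
    have hlow : ∀ x, lexLt (reflect (topDigit r) (tail x (bseq (alphaSeq r) (N b))))
        (alphaSeq r) := by
      intro x
      generalize hst : bst (N b) x = s
      obtain ⟨i, k⟩ := s
      refine bseq_lower (M := dd k + 1 + (dd k + 1 + dd (dd k + 1)) + 1) h0 hα hdd (hN b) hst
        (fun _ _ => rfl) (by omega) ?_
      rintro j rfl hj
      refine ⟨hGdd (2 * i + if b i then 1 else 0) _ ?_ _ ?_, by omega⟩
      · split_ifs <;> omega
      · change _ ≤ N b i
        omega
    refine ⟨mem_USeq_of_adm hr alpha_le (alpha_infinite hr) (val_alpha hr)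
      ⟨bseq_le hα, fun n _ => hup _, fun n _ => hlow _⟩, ?_⟩
    simp only [Set.mem_iUnion, not_exists]
    rintro q ⟨hq, hqr, hceil⟩ hmem
    have hadm := adm_of_mem_USeq hq hmem
    obtain ⟨t, ht1, ht2⟩ := alpha_strictMono hq hqr
    obtain ⟨x, hx⟩ := exists_block_start (fun i => (hN b i).1) (t + 1)
    have hpos := (hN b (t + 1)).1
    have hnext := bst_next hx hpos
    have hlast := bseq_last (α := alphaSeq r) hx (N b (t + 1) - 1) (by omega)
    have hlt := hadm.2.1 (x + (N b (t + 1) - 1)) (by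
      have h1 := hα (0 + (N b (t + 1) - 1))
      rw [hlast, topDigit_congr hceil]; omega)
    rw [show x + (N b (t + 1) - 1) + 1 = x + (N b (t + 1) - 0) by omega] at hlt
    have hbig := hNi b (t + 1 + 1)
    have hrun : ∀ i ≤ t, tail (x + (N b (t + 1) - 0)) (bseq (alphaSeq r) (N b)) i =
        alphaSeq r i := fun i hi => by
      rw [tail, bseq_run hnext i (by omega), zero_add]
    refine lexLt_irrefl _ (lexLt_trans hlt ⟨t, fun i hi => ?_, ?_⟩)
    · rw [hrun i hi.le, ht1 i hi]
    · rw [hrun t le_rfl]; exact ht2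
  intro hcount
  have hinj : Function.Injective fun b => bseq (alphaSeq r) (N b) := fun b b' hb =>
    hNinj (bseq_injective h0 hdd (hN b) (hN b') hb)
  have hc : Countable (ℕ → Bool) := by
    have := hcount.to_subtype
    exact Function.Injective.countable (f := fun b => (⟨_, hmem b⟩ :
      ↥(USeq r \ ⋃ q ∈ {q : ℝ | 1 < q ∧ q < r ∧ ⌈q⌉ = ⌈r⌉}, USeq q)))
      fun b b' hb => hinj (congrArg Subtype.val hb)
  have hcard : Cardinal.mk (ℕ → Bool) ≤ Cardinal.aleph0 := Cardinal.mk_le_aleph0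
  simp only [Cardinal.mk_pi, Cardinal.mk_bool, Cardinal.prod_const, Cardinal.mk_nat,
    Cardinal.lift_id] at hcard
  exact absurd (Cardinal.cantor Cardinal.aleph0) (not_lt.2 (by simpa using hcard))

/-- The strict reflection condition implies approximability by univoque bases. If `α(r)` is not
purely periodic then `r` itself is univoque; otherwise the drops are bounded, and the sequence with
one long block followed by constant shorter blocks is the unique expansion of `1` in a base just
below `r`. -/
theorem closure_of_strictRefl {r : ℝ} (hr : 1 < r) (h : StrictRefl r) :
    r ∈ closure UnivBases := by
  have h0 := alpha_zero hr
  have hα : ∀ i, alphaSeq r i ≤ topDigit r := alpha_le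
  have htail := tail_alpha_le hr
  obtain ⟨hA, hA1, hA2⟩ := topDigit_spec hr
  by_cases hper : ∀ m, 1 ≤ m → lexLt (tail m (alphaSeq r)) (alphaSeq r)
  · refine subset_closure (univ_of_mem_USeq hr (mem_USeq_of_adm hr alpha_le (alpha_infinite hr)
      (val_alpha hr) ⟨alpha_le, fun n _ => hper _ (by omega), fun n _ => h _ (by omega)⟩)
      (val_alpha hr))
  push Not at hper
  obtain ⟨m, hm, hmle⟩ := hper
  have hmper : ∀ i, alphaSeq r (m + i) = alphaSeq r i :=
    congrFun (lexLe_antisymm (htail m) (lexLe_of_not_lexLt hmle))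
  obtain ⟨dd, hdd⟩ := exists_drop hr h
  obtain ⟨D, hD⟩ : ∃ D, ∀ k, dd k ≤ D := by
    have hshift : ∀ k, dd (m + k) = dd k := by
      intro k
      obtain ⟨h1, h2⟩ := hdd k
      obtain ⟨h3, h4⟩ := hdd (m + k)
      have e : ∀ i, alphaSeq r (m + k + i) = alphaSeq r (k + i) := fun i => by
        rw [add_assoc, hmper]
      simp only [e] at h3 h4
      rcases lt_trichotomy (dd (m + k)) (dd k) with hlt | heq | hgt
      · have := h1 _ hlt
        omega
      · exact heq
      · have := h3 _ hgt
        omega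
    refine ⟨∑ j ∈ Finset.range m, dd j, fun k => ?_⟩
    induction k using Nat.strong_induction_on with
    | _ k ih =>
      rcases Nat.lt_or_ge k m with hk | hk
      · exact Finset.single_le_sum (f := dd) (fun _ _ => Nat.zero_le _) (Finset.mem_range.2 hk)
      · have := hshift (k - m)
        rw [Nat.add_sub_cancel' hk] at this
        rw [this]
        exact ih _ (by omega)
  obtain ⟨p, hp, hpgood⟩ := exists_good htail hdd (2 * D + 10)
  rw [Metric.mem_closure_iff]
  intro ε hε
  obtain ⟨q₀, hq₀, hq₀r⟩ := exists_between (max_lt (max_lt hr hA1) (by linarith : r - ε < r))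
  obtain ⟨⟨hq1, hqA⟩, hqε⟩ : (1 < q₀ ∧ (topDigit r : ℝ) < q₀) ∧ r - ε < q₀ := by
    simpa only [max_lt_iff] using hq₀
  have hq0 : 0 < q₀ := by linarith
  have hbig : 1 < val q₀ (alphaSeq r) := by
    rw [← val_alpha hr]
    exact val_strictAnti hq1 hq₀r hα (n := 0) (by rw [h0]; omega)
  obtain ⟨n₀, hn₀⟩ := ((summable_digits hq1 hα).hasSum.tendsto_sum_nat.eventually
    (lt_mem_nhds hbig)).exists
  obtain ⟨n, hn, hngood⟩ := exists_good htail hdd (n₀ + p + 1)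
  let N : ℕ → ℕ := fun i => if i = 0 then n else p
  have hN0 : N 0 = n := rfl
  have hN1 : ∀ i, N (i + 1) = p := fun i => rfl
  have hN : ∀ i, Good dd (N i) := by
    rintro (_ | i)
    · exact hngood
    · exact hpgood
  generalize hdef : bseq (alphaSeq r) N = d
  have hdle : ∀ i, d i ≤ topDigit r := fun i => by rw [← hdef]; exact bseq_le hα i
  have hdagree : ∀ t < n - 1, d t = alphaSeq r t := by
    intro t ht
    have := bseq_run (α := alphaSeq r) (x := 0) (i := 0) (k := 0) (N := N) rfl t
      (by rw [hN0]; omega)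
    rw [zero_add, hdef] at this
    exact this
  have hdup : ∀ x, lexLt (tail x d) (alphaSeq r) := fun x => by
    rw [← hdef]
    exact bseq_upper h0 htail hdd hN (i := (bst N x).1) (k := (bst N x).2) rfl fun _ _ => rfl
  have hdinf : InfiniteSeq d := by
    intro M
    -- block starts carry the digit `A > 0`, and the start of block `M` is at position at least `M`
    have hge : ∀ i x, bst N x = (i, 0) → i ≤ x := by
      have : ∀ x, (bst N x).1 ≤ x := by
        intro x
        induction x with
        | zero => exact le_rfl
        | succ x ih =>
          rw [bst]
          split_ifs <;> simp only <;> omega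
      intro i x hx
      have := this x
      rwa [hx] at this
    obtain ⟨x, hx⟩ := exists_block_start (fun i => (hN i).1) M
    refine ⟨x, hge M x hx, ?_⟩
    have hNM : 0 + 0 + 1 < N M := by
      simp only [N]; split_ifs <;> omega
    have := bseq_run (α := alphaSeq r) hx 0 hNM
    rw [add_zero, hdef, add_zero, h0] at this
    omega
  have hself : Adm (topDigit r) d d := by
    refine ⟨hdle, fun x _ => ?_, fun x _ => ?_⟩
    · rw [← hdef]
      generalize hst : bst N (x + 1) = s
      obtain ⟨i, k⟩ := s
      refine bseq_upper h0 htail hdd hN hst fun t ht => ?_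
      rw [hdef]
      refine hdagree t ?_
      rcases i with _ | i
      · -- in the initial block the offset of a proper tail is positive
        have hk : k ≠ 0 := by
          rintro rfl
          rw [bst] at hst
          split_ifs at hst <;> simp at hst
        rw [hN0] at ht
        omega
      · rw [hN1] at ht
        omega
    · rw [← hdef]
      generalize hst : bst N (x + 1) = s
      obtain ⟨i, k⟩ := s
      have hDk := hD k
      refine bseq_lower (M := n - 1) h0 hα hdd hN hst (fun t ht => ?_) (by omega) ?_
      · rw [hdef]
        exact hdagree t ht
      · rintro j rfl hj
        have := hD (dd k + 1)
        rw [hN1]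
        omega
  have hcont : ContinuousOn (fun s => val s d) (Set.Icc q₀ r) := fun s hs =>
    ContinuousAt.continuousWithinAt (tendsto_val (hq1.trans_le hs.1) Filter.tendsto_id (A := topDigit r) (c := fun _ => d)
      (Filter.Eventually.of_forall fun _ => hdle)
      fun _ => Filter.Eventually.of_forall fun _ => rfl)
  have hr1 : val r d < 1 := by
    refine val_lt_one hr hα (alpha_infinite hr) (val_alpha hr) hdle ?_ fun n _ => hdup _
    have := hdup 0
    rwa [show tail 0 d = d by funext i; simp [tail]] at this
  have hq₀1 : 1 < val q₀ d := by
    refine hn₀.trans_le (le_trans (le_of_eq ?_) (sum_le_val hq1 hdle n₀))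
    refine Finset.sum_congr rfl fun i hi => ?_
    rw [hdagree i (by have := Finset.mem_range.1 hi; omega)]
  obtain ⟨q, hq, hqv⟩ := intermediate_value_Icc' hq₀r.le hcont ⟨hr1.le, hq₀1.le⟩
  have hq1' : 1 < q := hq1.trans_le hq.1
  have hceil : topDigit q = topDigit r :=
    topDigit_congr (ceil_eq_of_topDigit hr (hqA.trans_le hq.1) (hq.2.trans hA2))
  refine ⟨q, univ_of_mem_USeq hq1' (mem_USeq_of_adm hq1' (by rw [hceil]; exact hdle) hdinf hqv
    (by rw [hceil]; exact hself)) hqv, ?_⟩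
  rw [Real.dist_eq, abs_lt]
  constructor <;> linarith [hq.1, hq.2]

/-- Corollary 2.4. For `r > 1` the following are equivalent:
(i) `r ∈ closure 𝒰`; (ii) `𝒰_r' \ ℱ_r'` is uncountable, where `ℱ_r' = ⋃ 𝒰_q'` over `q < r`
with `⌈q⌉ = ⌈r⌉`; (iii) `𝒰_r' \ 𝒰_q'` is uncountable for each such `q`; (iv) `𝒰_r' \ 𝒰_q'`
is nonempty for each such `q`. -/
theorem mem_closure_univBases_tfae (r : ℝ) (hr : 1 < r) :
    [r ∈ closure UnivBases,
     ¬ (USeq r \ ⋃ q ∈ {q : ℝ | 1 < q ∧ q < r ∧ ⌈q⌉ = ⌈r⌉}, USeq q).Countable,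
     ∀ q : ℝ, 1 < q → q < r → ⌈q⌉ = ⌈r⌉ → ¬ (USeq r \ USeq q).Countable,
     ∀ q : ℝ, 1 < q → q < r → ⌈q⌉ = ⌈r⌉ → (USeq r \ USeq q).Nonempty].TFAE := by
  tfae_have 1 → 2 := fun h => uncountable_of_strictRefl hr (strictRefl_of_closure hr h)
  tfae_have 2 → 3 := by
    intro h q hq hqr hceil hc
    refine h (hc.mono ?_)
    intro c hcm
    refine ⟨hcm.1, fun hcq => hcm.2 ?_⟩
    simp only [Set.mem_iUnion]
    exact ⟨q, ⟨hq, hqr, hceil⟩, hcq⟩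
  tfae_have 3 → 4 := by
    intro h q hq hqr hceil
    rw [Set.nonempty_iff_ne_empty]
    intro he
    exact h q hq hqr hceil (by rw [he]; exact Set.countable_empty)
  tfae_have 4 → 1 := fun h => closure_of_strictRefl hr (strictRefl_of_nonempty hr h)
  tfae_finish
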